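/- Let S = (S_α)_{α ∈ ℕ₀ⁿ} be a sequence of symmetric matrices in M_t(ℝ). Then S is a matrix-valued [-1,1]ⁿ-moment sequence if and only if Σ_{β ∈ ℕ₀^{2n}, β ≤ α} (-1)^{e(β)} C(α,β) tr(G S_{π(β)}) ≥ 0 for all positive definite matrices G ∈ M_t(ℝ) and all α ∈ ℕ₀^{2n}, where for α = (α₁,…,α_{2n}) and β = (β₁,…,β_{2n}): β ≤ α means β_i ≤ α_i for all i; C(α,β) = C(α₁,β₁)⋯C(α_{2n},β_{2n}) is a product of binomial coefficients; e(β) = Σ_{i=1}^{n} β_{2i}; and π(β) = (β₁+β₂, β₃+β₄, …, β_{2n-1}+β_{2n}) ∈ ℕ₀ⁿ is the multi-index arising from expanding (1+X₁)^{α₁}(1-X₁)^{α₂}⋯(1+Xₙ)^{α_{2n-1}}(1-Xₙ)^{α_{2n}}. -/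

import Mathlib

open MeasureTheory

/-- Integral of a real function against a finite signed measure (via Jordan decomposition). -/
noncomputable def sInt {α : Type*} [MeasurableSpace α] (s : SignedMeasure α) (f : α → ℝ) : ℝ :=
  (∫ x, f x ∂s.toJordanDecomposition.posPart) - ∫ x, f x ∂s.toJordanDecomposition.negPart

/-- A matrix-valued measure (a `t × t` matrix of finite signed Borel measures on `ℝⁿ`)
is positive semidefinite if its value on every Borel set is a positive semidefinite matrix. -/
def IsPSDMatMeas {n t : ℕ} (E : Fin t → Fin t → SignedMeasure (Fin n → ℝ)) : Prop :=
  ∀ A : Set (Fin n → ℝ), MeasurableSet A → (Matrix.of fun i j => E i j A).PosSemidef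

/-- The support of the matrix-valued measure `E` is contained in the closed set `K`:
each entry (as a signed measure) vanishes in total variation outside of `K`. -/
def SuppSubset {n t : ℕ} (E : Fin t → Fin t → SignedMeasure (Fin n → ℝ))
    (K : Set (Fin n → ℝ)) : Prop :=
  ∀ i j, (E i j).totalVariation Kᶜ = 0


/-- `S` is a matrix-valued `K`-moment sequence: there is a positive semidefinite matrix-valued
measure `E` supported in `K` with `S α = ∫ x^α dE(x)` entrywise. -/
def IsMatMomentSeq {n t : ℕ} (S : (Fin n → ℕ) → Matrix (Fin t) (Fin t) ℝ)
    (K : Set (Fin n → ℝ)) : Prop :=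
  ∃ E : Fin t → Fin t → SignedMeasure (Fin n → ℝ), IsPSDMatMeas E ∧ SuppSubset E K ∧
    ∀ (α : Fin n → ℕ) i j, S α i j = sInt (E i j) fun x => ∏ k, x k ^ α k

/-!
Let `L` be the linear map on polynomials with `L (x ^ α) = S α`. Expanding the product shows that
the sum over `β` is `tr (G * L (∏ k, (1 + x k) ^ a k * (1 - x k) ^ b k))`.

* If a functional is nonnegative on all these products, it is nonnegative on every polynomial that
  is nonnegative on the cube: normalized functionals of this kind form a compact convex set whose
  extreme points are multiplicative, hence evaluations at points of the cube, and Krein–Milman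
  applies.
* By self-duality of the cone of positive semidefinite matrices, `L p` is therefore positive
  semidefinite whenever `p ≥ 0` on the cube.
* For each vector `v`, the Riesz extension theorem and the Riesz–Markov–Kakutani theorem represent
  `p ↦ vᵀ (L p) v` by a positive measure. Polarization gives the entries of a matrix-valued measure,
  and it is positive semidefinite because measures on the cube are determined by their moments.
-/

open scoped NNReal Matrix

section ArchimedeanPreprime

variable {A : Type*} [CommRing A] [Algebra ℝ A] {T : Subalgebra ℝ≥0 A}

lemma nnrealSubalgebra_smul_mem {r : ℝ} (hr : 0 ≤ r) {a : A} (ha : a ∈ T) : r • a ∈ T :=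
  T.smul_mem ha ⟨r, hr⟩

/-- The elements of `A` bounded by a constant in the order whose positive cone is the preprime
`T`. A preprime is encoded as an `ℝ≥0`-subalgebra, and it is archimedean if this is all of `A`. -/
def boundedSubalgebra (T : Subalgebra ℝ≥0 A) : Subalgebra ℝ A where
  carrier := {a | ∃ c : ℝ, 0 < c ∧ c • 1 + a ∈ T ∧ c • 1 - a ∈ T}
  mul_mem' := by
    rintro a b ⟨c, hc, hca, hca'⟩ ⟨d, hd, hdb, hdb'⟩
    have hplus : (c • 1 + a) * (d • 1 + b) + c • (d • 1 - b) + d • (c • 1 - a) ∈ T :=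
      add_mem (add_mem (mul_mem hca hdb) (nnrealSubalgebra_smul_mem hc.le hdb'))
        (nnrealSubalgebra_smul_mem hd.le hca')
    have hminus : (c • 1 + a) * (d • 1 - b) + c • (d • 1 + b) + d • (c • 1 - a) ∈ T :=
      add_mem (add_mem (mul_mem hca hdb') (nnrealSubalgebra_smul_mem hc.le hdb))
        (nnrealSubalgebra_smul_mem hd.le hca')
    refine ⟨3 * (c * d), by positivity, ?_, ?_⟩
    · convert hplus using 1
      simp only [Algebra.smul_def, map_mul, map_ofNat]
      ring
    · convert hminus using 1
      simp only [Algebra.smul_def, map_mul, map_ofNat]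
      ring
  add_mem' := by
    rintro a b ⟨c, hc, hca, hca'⟩ ⟨d, hd, hdb, hdb'⟩
    refine ⟨c + d, add_pos hc hd, ?_, ?_⟩
    · convert add_mem hca hdb using 1
      module
    · convert add_mem hca' hdb' using 1
      module
  algebraMap_mem' r := by
    refine ⟨|r| + 1, by positivity, ?_, ?_⟩
    · convert nnrealSubalgebra_smul_mem (by linarith [neg_abs_le r] : 0 ≤ |r| + 1 + r)
        (one_mem T) using 1
      rw [Algebra.algebraMap_eq_smul_one, add_smul _ r]
    · convert nnrealSubalgebra_smul_mem (by linarith [le_abs_self r] : 0 ≤ |r| + 1 - r)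
        (one_mem T) using 1
      rw [Algebra.algebraMap_eq_smul_one, sub_smul _ r]

/-- The states of `A`: the linear functionals that are nonnegative on `T` and take the value `1`
at `1`. They are viewed inside `A → ℝ`, whose product topology is the weak-* topology. -/
def stateSpace (T : Subalgebra ℝ≥0 A) : Set (A → ℝ) :=
  {f | f ∈ Set.range ((⇑) : (A →ₗ[ℝ] ℝ) → A → ℝ) ∧ f 1 = 1 ∧ ∀ a ∈ T, 0 ≤ f a}

lemma abs_map_le_mul_map_one {l : A →ₗ[ℝ] ℝ} (hl : ∀ a ∈ T, 0 ≤ l a) {c : ℝ} {a : A}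
    (h : c • 1 + a ∈ T) (h' : c • 1 - a ∈ T) : |l a| ≤ c * l 1 := by
  have hplus := hl _ h
  have hminus := hl _ h'
  rw [map_add, map_smul, smul_eq_mul] at hplus
  rw [map_sub, map_smul, smul_eq_mul] at hminus
  exact abs_le.2 ⟨by linarith, by linarith⟩

lemma convex_stateSpace : Convex ℝ (stateSpace T) := by
  rintro _ ⟨⟨l, rfl⟩, hl1, hl⟩ _ ⟨⟨m, rfl⟩, hm1, hm⟩ r s hr hs hrs
  refine ⟨⟨r • l + s • m, rfl⟩, by simp [hl1, hm1, hrs], fun a ha => ?_⟩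
  exact add_nonneg (mul_nonneg hr (hl a ha)) (mul_nonneg hs (hm a ha))

lemma isClosed_stateSpace : IsClosed (stateSpace T) := by
  have heq : stateSpace T = Set.range ((⇑) : (A →ₗ[ℝ] ℝ) → A → ℝ) ∩
      ({f | f 1 = 1} ∩ ⋂ a ∈ T, {f | 0 ≤ f a}) := by
    ext f
    simp [stateSpace]
  rw [heq]
  refine (LinearMap.isClosed_range_coe A ℝ (RingHom.id ℝ)).inter (IsClosed.inter ?_ ?_)
  · exact isClosed_eq (continuous_apply 1) continuous_const
  · exact isClosed_biInter fun a _ => isClosed_le continuous_const (continuous_apply a)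

lemma isCompact_stateSpace (hT : boundedSubalgebra T = ⊤) : IsCompact (stateSpace T) := by
  have hbounded (a : A) : ∃ c : ℝ, 0 < c ∧ c • 1 + a ∈ T ∧ c • 1 - a ∈ T :=
    show a ∈ boundedSubalgebra T from hT ▸ Algebra.mem_top
  choose c _ hc hc' using hbounded
  refine (isCompact_univ_pi fun a => isCompact_Icc (a := -c a) (b := c a)).of_isClosed_subset
    isClosed_stateSpace ?_
  rintro _ ⟨⟨l, rfl⟩, hl1, hl⟩ a -
  have := abs_map_le_mul_map_one hl (hc a) (hc' a)
  rwa [hl1, mul_one, abs_le] at this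

-- `b` is `T`-bounded and `l b = 0`, so `l` is the midpoint of the states `p ↦ l ((1 ± b / c) p)`.
lemma map_mul_eq_zero_of_mem_extremePoints {l : A →ₗ[ℝ] ℝ}
    (hl : ⇑l ∈ (stateSpace T).extremePoints ℝ) {b : A} (hb : b ∈ boundedSubalgebra T)
    (hlb : l b = 0) (p : A) : l (b * p) = 0 := by
  obtain ⟨c, hc, hplus, hminus⟩ := hb
  have hperturb {b : A} (hb : c • 1 + b ∈ T) (hlb : l b = 0) :
      ⇑(c⁻¹ • l ∘ₗ LinearMap.mulLeft ℝ (c • 1 + b)) ∈ stateSpace T := by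
    refine ⟨⟨_, rfl⟩, ?_, fun a ha => mul_nonneg (by positivity) (hl.1.2.2 _ (mul_mem hb ha))⟩
    simp [hlb, hl.1.2.1, hc.ne']
  have hmid : ⇑l ∈ openSegment ℝ (⇑(c⁻¹ • l ∘ₗ LinearMap.mulLeft ℝ (c • 1 + b)))
      (⇑(c⁻¹ • l ∘ₗ LinearMap.mulLeft ℝ (c • 1 + -b))) := by
    refine ⟨1 / 2, 1 / 2, by norm_num, by norm_num, by norm_num, funext fun a => ?_⟩
    simp only [one_div, LinearMap.coe_smul, LinearMap.coe_comp, Pi.add_apply, Pi.smul_apply,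
      Function.comp_apply, LinearMap.mulLeft_apply, add_mul, smul_mul_assoc, one_mul, map_add,
      map_smul, smul_eq_mul, neg_mul, map_neg]
    field_simp
    ring
  have heq := congrFun (hl.2 (hperturb hplus hlb)
    (hperturb (by rwa [← sub_eq_add_neg]) (by rw [map_neg, hlb, neg_zero])) hmid) p
  simp only [LinearMap.smul_apply, LinearMap.coe_comp, Function.comp_apply,
    LinearMap.mulLeft_apply, add_mul, smul_mul_assoc, one_mul, map_add, map_smul,
    smul_eq_mul] at heq
  field_simp at heq
  linarith

lemma exists_algHom_of_mem_extremePoints (hT : boundedSubalgebra T = ⊤) {f : A → ℝ}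
    (hf : f ∈ (stateSpace T).extremePoints ℝ) : ∃ χ : A →ₐ[ℝ] ℝ, ⇑χ = f := by
  obtain ⟨l, rfl⟩ := hf.1.1
  have hl1 : l 1 = 1 := hf.1.2.1
  refine ⟨AlgHom.ofLinearMap l hl1 fun a p => ?_, rfl⟩
  have := map_mul_eq_zero_of_mem_extremePoints hf (b := a - l a • 1)
    (hT ▸ Algebra.mem_top) (by simp [hl1]) p
  rwa [sub_mul, smul_one_mul, map_sub, map_smul, smul_eq_mul, sub_eq_zero] at this

lemma nonneg_of_mem_stateSpace (hT : boundedSubalgebra T = ⊤) {a : A}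
    (ha : ∀ χ : A →ₐ[ℝ] ℝ, (∀ b ∈ T, 0 ≤ χ b) → 0 ≤ χ a) {f : A → ℝ}
    (hf : f ∈ stateSpace T) : 0 ≤ f a := by
  rw [← closure_convexHull_extremePoints (isCompact_stateSpace hT) convex_stateSpace] at hf
  refine closure_minimal (t := {g : A → ℝ | 0 ≤ g a}) (convexHull_min ?_ ?_) ?_ hf
  · intro g hg
    obtain ⟨χ, rfl⟩ := exists_algHom_of_mem_extremePoints hT hg
    exact ha χ hg.1.2.2
  · exact convex_halfSpace_ge (LinearMap.proj (R := ℝ) (φ := fun _ : A => ℝ) a).isLinear 0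
  · exact isClosed_le continuous_const (continuous_apply a)

theorem nonneg_of_forall_algHom_nonneg (hT : boundedSubalgebra T = ⊤) {a : A}
    (ha : ∀ χ : A →ₐ[ℝ] ℝ, (∀ b ∈ T, 0 ≤ χ b) → 0 ≤ χ a) {l : A →ₗ[ℝ] ℝ}
    (hl : ∀ b ∈ T, 0 ≤ l b) : 0 ≤ l a := by
  obtain h1 | h1 := (hl 1 (one_mem T)).eq_or_lt
  · obtain ⟨c, -, hc, hc'⟩ : a ∈ boundedSubalgebra T := hT ▸ Algebra.mem_top
    have := abs_map_le_mul_map_one hl hc hc'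
    rw [← h1, mul_zero, abs_nonpos_iff] at this
    exact this.ge
  · have hstate : ⇑((l 1)⁻¹ • l) ∈ stateSpace T :=
      ⟨⟨_, rfl⟩, inv_mul_cancel₀ h1.ne', fun b hb => mul_nonneg (by positivity) (hl b hb)⟩
    exact nonneg_of_mul_nonneg_right (nonneg_of_mem_stateSpace hT ha hstate) (inv_pos.2 h1)

end ArchimedeanPreprime

section Box

variable {σ : Type*}

/-- The product `∏ k, (1 + X k) ^ a k * (1 - X k) ^ b k`, where `α k = (a k, b k)`. -/
noncomputable def boxMonomial [Fintype σ] (α : σ → ℕ × ℕ) : MvPolynomial σ ℝ :=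
  ∏ k, (1 + MvPolynomial.X k) ^ (α k).1 * (1 - MvPolynomial.X k) ^ (α k).2

/-- The preprime generated by the constraints `0 ≤ 1 + X k` and `0 ≤ 1 - X k` of the box. -/
noncomputable def boxPreprime (σ : Type*) : Subalgebra ℝ≥0 (MvPolynomial σ ℝ) :=
  Algebra.adjoin ℝ≥0 (Set.range
    (Sum.elim (fun k => 1 + MvPolynomial.X k) (fun k => 1 - MvPolynomial.X k) :
      σ ⊕ σ → MvPolynomial σ ℝ))

lemma one_add_X_mem_boxPreprime (k : σ) : 1 + MvPolynomial.X k ∈ boxPreprime σ :=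
  Algebra.subset_adjoin ⟨Sum.inl k, rfl⟩

lemma one_sub_X_mem_boxPreprime (k : σ) : 1 - MvPolynomial.X k ∈ boxPreprime σ :=
  Algebra.subset_adjoin ⟨Sum.inr k, rfl⟩

lemma boundedSubalgebra_boxPreprime : boundedSubalgebra (boxPreprime σ) = ⊤ := by
  rw [eq_top_iff, ← MvPolynomial.adjoin_range_X, Algebra.adjoin_le_iff]
  rintro _ ⟨k, rfl⟩
  refine ⟨1, one_pos, ?_, ?_⟩
  · simpa using one_add_X_mem_boxPreprime k
  · simpa using one_sub_X_mem_boxPreprime k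

variable [Fintype σ]

lemma map_nonneg_of_mem_boxPreprime {l : MvPolynomial σ ℝ →ₗ[ℝ] ℝ}
    (hl : ∀ α, 0 ≤ l (boxMonomial α)) {p : MvPolynomial σ ℝ} (hp : p ∈ boxPreprime σ) :
    0 ≤ l p := by
  rw [boxPreprime, ← Subalgebra.mem_toSubmodule, Algebra.adjoin_eq_span] at hp
  induction hp using Submodule.span_induction with
  | mem p hp =>
    obtain ⟨e, rfl⟩ := Submonoid.mem_closure_range_iff_of_fintype.1 hp
    simpa [boxMonomial, Fintype.prod_sum_type, Finset.prod_mul_distrib] using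
      hl fun k => (e (Sum.inl k), e (Sum.inr k))
  | zero => simp
  | add p q _ _ hp hq => simpa using add_nonneg hp hq
  | smul r p _ hp => simpa [NNReal.smul_def] using mul_nonneg r.2 hp

-- A character is evaluation at the point of its values on the variables.
theorem nonneg_of_forall_boxMonomial_nonneg {l : MvPolynomial σ ℝ →ₗ[ℝ] ℝ}
    (hl : ∀ α, 0 ≤ l (boxMonomial α)) {p : MvPolynomial σ ℝ}
    (hp : ∀ x ∈ Set.Icc (-1 : σ → ℝ) 1, 0 ≤ MvPolynomial.eval x p) : 0 ≤ l p := by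
  refine nonneg_of_forall_algHom_nonneg boundedSubalgebra_boxPreprime (fun χ hχ => ?_)
    fun q hq => map_nonneg_of_mem_boxPreprime hl hq
  rw [MvPolynomial.aeval_unique χ, MvPolynomial.aeval_eq_eval]
  refine hp _ ⟨fun k => ?_, fun k => ?_⟩
  · have := hχ _ (one_add_X_mem_boxPreprime k)
    rw [map_add, map_one] at this
    simp only [Pi.neg_apply, Pi.one_apply, Function.comp_apply]
    linarith
  · have := hχ _ (one_sub_X_mem_boxPreprime k)
    rw [map_sub, map_one] at this
    simp only [Pi.one_apply, Function.comp_apply]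
    linarith

end Box

section Haviland

variable {V : Type*} [AddCommGroup V] [Module ℝ V]

lemma exists_nonneg_extension_of_linearMap {E : Type*} [AddCommGroup E] [Module ℝ E]
    (C : PointedCone ℝ E) (T : V →ₗ[ℝ] E) (hT : ∀ y, ∃ v, T v + y ∈ C) {l : V →ₗ[ℝ] ℝ}
    (hl : ∀ v, T v ∈ C → 0 ≤ l v) :
    ∃ Λ : E →ₗ[ℝ] ℝ, (∀ y ∈ C, 0 ≤ Λ y) ∧ ∀ v, Λ (T v) = l v := by
  have hker : LinearMap.ker T ≤ LinearMap.ker l := fun v hv => by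
    rw [LinearMap.mem_ker] at hv ⊢
    have hpos := hl v (hv ▸ zero_mem C)
    have hneg := hl (-v) (by rw [map_neg, hv, neg_zero]; exact zero_mem C)
    rw [map_neg] at hneg
    linarith
  let e : E →ₗ.[ℝ] ℝ := ⟨LinearMap.range T,
    (LinearMap.ker T).liftQ l hker ∘ₗ T.quotKerEquivRange.symm⟩
  have he (v : V) : e ⟨T v, v, rfl⟩ = l v := by
    have : T.quotKerEquivRange.symm ⟨T v, v, rfl⟩ = (LinearMap.ker T).mkQ v :=
      T.quotKerEquivRange.symm_apply_eq.2 rfl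
    change (LinearMap.ker T).liftQ l hker (T.quotKerEquivRange.symm ⟨T v, v, rfl⟩) = l v
    rw [this, Submodule.mkQ_apply, Submodule.liftQ_apply]
  obtain ⟨Λ, hΛe, hΛ⟩ := riesz_extension C e
    (fun ⟨_, v, hv⟩ hC => by subst hv; exact he v ▸ hl v hC)
    (fun y => let ⟨v, hv⟩ := hT y; ⟨⟨T v, v, rfl⟩, hv⟩)
  exact ⟨Λ, hΛ, fun v => (hΛe ⟨T v, v, rfl⟩).trans (he v)⟩

variable {X : Type*} [TopologicalSpace X] [CompactSpace X] [T2Space X] [MeasurableSpace X]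
  [BorelSpace X]

lemma exists_measure_eq_integral_of_nonneg (Λ : C(X, ℝ) →ₗ[ℝ] ℝ) (hΛ : ∀ f, 0 ≤ f → 0 ≤ Λ f) :
    ∃ μ : Measure X, IsFiniteMeasure μ ∧ ∀ f, Λ f = ∫ x, f x ∂μ := by
  let Ψ : CompactlySupportedContinuousMap X ℝ →ₚ[ℝ] ℝ := PositiveLinearMap.mk₀
    { toFun f := Λ f.toContinuousMap
      map_add' f g := map_add Λ f.toContinuousMap g.toContinuousMap
      map_smul' c f := map_smul Λ c f.toContinuousMap } fun f hf => hΛ f.toContinuousMap hf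
  refine ⟨RealRMK.rieszMeasure Ψ, inferInstance, fun f => ?_⟩
  exact (RealRMK.integral_rieszMeasure Ψ
    (CompactlySupportedContinuousMap.continuousMapEquiv f)).symm

theorem exists_measure_of_forall_nonneg (T : V →ₗ[ℝ] C(X, ℝ)) {u : V} (hu : T u = 1)
    {l : V →ₗ[ℝ] ℝ} (hl : ∀ v, 0 ≤ T v → 0 ≤ l v) :
    ∃ μ : Measure X, IsFiniteMeasure μ ∧ ∀ v, l v = ∫ x, T v x ∂μ := by
  have hcofinal (f : C(X, ℝ)) : ∃ v, T v + f ∈ PointedCone.positive ℝ C(X, ℝ) := by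
    refine ⟨‖f‖ • u, fun x => ?_⟩
    rw [map_smul, hu]
    simpa using neg_le_iff_add_nonneg'.1 (neg_le_of_abs_le (f.norm_coe_le_norm x))
  obtain ⟨Λ, hΛ, hΛT⟩ := exists_nonneg_extension_of_linearMap _ T hcofinal hl
  obtain ⟨μ, hμ, hμΛ⟩ := exists_measure_eq_integral_of_nonneg Λ hΛ
  exact ⟨μ, hμ, fun v => by rw [← hΛT, hμΛ]⟩

end Haviland

section SignedMeasure

variable {X : Type*} [MeasurableSpace X]

instance isFiniteMeasure_variation_signedMeasure (s : SignedMeasure X) :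
    IsFiniteMeasure s.variation := by
  rw [← s.totalVariation_eq_variation]
  infer_instance

lemma sInt_eq_integral {s : SignedMeasure X} {f : X → ℝ} (hf : s.Integrable f) :
    sInt s f = ∫ᵛ x, f x ∂<•s := by
  rw [VectorMeasure.Integrable, ← s.totalVariation_eq_variation, SignedMeasure.totalVariation,
    integrable_add_measure] at hf
  conv_rhs => rw [← s.toSignedMeasure_toJordanDecomposition, JordanDecomposition.toSignedMeasure]
  rw [VectorMeasure.integral_sub_vectorMeasure, VectorMeasure.integral_toSignedMeasure,
    VectorMeasure.integral_toSignedMeasure, sInt]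
  · rw [VectorMeasure.Integrable, Measure.variation_toSignedMeasure]
    exact hf.1
  · rw [VectorMeasure.Integrable, Measure.variation_toSignedMeasure]
    exact hf.2

lemma exists_toSignedMeasure_eq_of_nonneg {s : SignedMeasure X} (hs : 0 ≤ s) :
    ∃ (μ : Measure X) (_ : IsFiniteMeasure μ), μ.toSignedMeasure = s :=
  ⟨s.toMeasureOfZeroLE Set.univ .univ ((VectorMeasure.le_restrict_univ_iff_le _ _).2 hs),
    inferInstance, s.toMeasureOfZeroLE_toSignedMeasure _⟩

lemma integral_signedMeasure_nonneg {s : SignedMeasure X} (hs : 0 ≤ s) {f : X → ℝ}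
    (hf : ∀ᵐ x ∂s.variation, 0 ≤ f x) : 0 ≤ ∫ᵛ x, f x ∂<•s := by
  obtain ⟨μ, _, rfl⟩ := exists_toSignedMeasure_eq_of_nonneg hs
  rw [Measure.variation_toSignedMeasure] at hf
  rw [VectorMeasure.integral_toSignedMeasure]
  exact integral_nonneg_of_ae hf

variable [TopologicalSpace X] [BorelSpace X]

lemma integrable_signedMeasure_of_continuous [T2Space X] {K : Set X} (hK : IsCompact K)
    {s : SignedMeasure X} (hs : s.variation Kᶜ = 0) {f : X → ℝ} (hf : Continuous f) :
    s.Integrable f := by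
  rw [VectorMeasure.Integrable, ← Measure.restrict_eq_self_of_ae_mem (show ∀ᵐ x ∂_, x ∈ K from hs)]
  exact hf.continuousOn.integrableOn_compact hK

variable [CompactSpace X]

lemma ext_of_forall_mem_subalgebra_integral_eq [HasOuterApproxClosed X] {μ ν : Measure X}
    [IsFiniteMeasure μ] [IsFiniteMeasure ν] {B : Subalgebra ℝ C(X, ℝ)} (hB : B.SeparatesPoints)
    (h : ∀ f ∈ B, ∫ x, f x ∂μ = ∫ x, f x ∂ν) : μ = ν := by
  have hcont (ρ : Measure X) [IsFiniteMeasure ρ] : Continuous fun f : C(X, ℝ) => ∫ x, f x ∂ρ :=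
    (continuous_integral.comp (ContinuousMap.toLp (E := ℝ) 1 ρ ℝ).continuous).congr
      fun f => integral_congr_ae (ContinuousMap.coeFn_toLp ρ f)
  have hall (f : C(X, ℝ)) : ∫ x, f x ∂μ = ∫ x, f x ∂ν := by
    have hf : f ∈ B.topologicalClosure := by
      rw [ContinuousMap.subalgebra_topologicalClosure_eq_top_of_separatesPoints B hB]
      exact Algebra.mem_top
    exact closure_minimal h (isClosed_eq (hcont μ) (hcont ν)) hf
  exact ext_of_forall_integral_eq_of_IsFiniteMeasure fun f => hall f.toContinuousMap

lemma signedMeasure_eq_zero_of_forall_mem_subalgebra [T2Space X] [HasOuterApproxClosed X]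
    {s : SignedMeasure X} {B : Subalgebra ℝ C(X, ℝ)} (hB : B.SeparatesPoints)
    (h : ∀ f ∈ B, ∫ᵛ x, f x ∂<•s = 0) : s = 0 := by
  have hparts : s.toJordanDecomposition.posPart = s.toJordanDecomposition.negPart := by
    refine ext_of_forall_mem_subalgebra_integral_eq hB fun f hf => ?_
    rw [← sub_eq_zero, ← h f hf]
    exact sInt_eq_integral
      (integrable_signedMeasure_of_continuous isCompact_univ (by simp) f.continuous)
  rw [← s.toSignedMeasure_toJordanDecomposition, JordanDecomposition.toSignedMeasure,
    ← sub_self s.toJordanDecomposition.negPart.toSignedMeasure]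
  congr

lemma signedMeasure_nonneg_of_forall_mem_subalgebra [T2Space X] [HasOuterApproxClosed X]
    {s : SignedMeasure X} {B : Subalgebra ℝ C(X, ℝ)} (hB : B.SeparatesPoints)
    (h : ∀ f ∈ B, 0 ≤ f → 0 ≤ ∫ᵛ x, f x ∂<•s) : 0 ≤ s := by
  have hint (r : SignedMeasure X) (f : C(X, ℝ)) : r.Integrable f :=
    integrable_signedMeasure_of_continuous isCompact_univ (by simp) f.continuous
  let l : B →ₗ[ℝ] ℝ :=
    { toFun f := ∫ᵛ x, f.1 x ∂<•s
      map_add' f g := VectorMeasure.integral_fun_add (hint s f.1) (hint s g.1)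
      map_smul' c f := VectorMeasure.integral_fun_smul _ _ c _ }
  obtain ⟨μ, _, hμ⟩ := exists_measure_of_forall_nonneg B.val.toLinearMap (u := 1) rfl (l := l)
    fun f => h f.1 f.2
  have hs : s - μ.toSignedMeasure = 0 := by
    refine signedMeasure_eq_zero_of_forall_mem_subalgebra hB fun f hf => ?_
    rw [VectorMeasure.integral_sub_vectorMeasure (hint _ f) (hint _ f),
      VectorMeasure.integral_toSignedMeasure, sub_eq_zero]
    exact hμ ⟨f, hf⟩
  rw [sub_eq_zero.1 hs]
  exact μ.zero_le_toSignedMeasure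

end SignedMeasure

section MatrixMeasure

variable {ι X : Type*} [MeasurableSpace X] {F : ι → ι → SignedMeasure X}

/-- Positive semidefiniteness of a matrix-valued measure, as in `IsPSDMatMeas` but on an arbitrary
measurable space. -/
def IsPosSemidefMeasure (F : ι → ι → SignedMeasure X) : Prop :=
  ∀ A, MeasurableSet A → (Matrix.of fun i j => F i j A).PosSemidef

section QuadMeasure

variable [Fintype ι]

/-- The signed measure `vᵀ F v` obtained by evaluating the matrix-valued measure `F` as a
quadratic form. -/
noncomputable def quadMeasure (F : ι → ι → SignedMeasure X) (v : ι → ℝ) : SignedMeasure X :=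
  ∑ i, ∑ j, (v i * v j) • F i j

lemma dotProduct_mulVec_eq_sum (M : Matrix ι ι ℝ) (v : ι → ℝ) :
    v ⬝ᵥ M *ᵥ v = ∑ i, ∑ j, v i * v j * M i j := by
  simp only [dotProduct, Matrix.mulVec, Finset.mul_sum]
  exact Finset.sum_congr rfl fun i _ => Finset.sum_congr rfl fun j _ => by ring

lemma quadMeasure_apply (v : ι → ℝ) (A : Set X) :
    quadMeasure F v A = v ⬝ᵥ (Matrix.of fun i j => F i j A) *ᵥ v := by
  simp [quadMeasure, dotProduct_mulVec_eq_sum]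

lemma integral_quadMeasure {f : X → ℝ} (hf : ∀ i j, (F i j).Integrable f) (v : ι → ℝ) :
    ∫ᵛ x, f x ∂<•quadMeasure F v = v ⬝ᵥ (Matrix.of fun i j => ∫ᵛ x, f x ∂<•F i j) *ᵥ v := by
  have hsmul (i j : ι) : ((v i * v j) • F i j).Integrable f := (hf i j).smul_vectorMeasure _
  rw [quadMeasure, VectorMeasure.integral_finsetSum_vectorMeasure
    fun i _ => VectorMeasure.Integrable.finsetSum_vectorMeasure fun j _ => hsmul i j]
  simp_rw [VectorMeasure.integral_finsetSum_vectorMeasure fun j _ => hsmul _ j,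
    VectorMeasure.integral_smul_vectorMeasure, dotProduct_mulVec_eq_sum, Matrix.of_apply,
    smul_eq_mul]

lemma isPosSemidefMeasure_iff :
    IsPosSemidefMeasure F ↔ (∀ i j, F i j = F j i) ∧ ∀ v, 0 ≤ quadMeasure F v := by
  simp only [IsPosSemidefMeasure, Matrix.posSemidef_iff_dotProduct_mulVec, star_trivial,
    ← quadMeasure_apply]
  refine ⟨fun h => ⟨fun i j => ?_, fun v A hA => (h A hA).2 v⟩,
    fun h A hA => ⟨?_, fun v => h.2 v A hA⟩⟩
  · exact VectorMeasure.ext fun A hA => (h A hA).1.apply j i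
  · exact Matrix.IsHermitian.ext fun i j => by simp [h.1 i j]

lemma ae_variation_quadMeasure {p : X → Prop} (hp : ∀ i j, ∀ᵐ x ∂(F i j).variation, p x)
    (v : ι → ℝ) : ∀ᵐ x ∂(quadMeasure F v).variation, p x := by
  have hle : (quadMeasure F v).variation ≤
      ∑ i, ∑ j, ‖v i * v j‖₊ • (F i j).variation := by
    simp_rw [← VectorMeasure.variation_smul]
    exact (VectorMeasure.variation_finsetSum_le _ _).trans
      (Finset.sum_le_sum fun i _ => VectorMeasure.variation_finsetSum_le _ _)
  refine (Measure.absolutelyContinuous_of_le hle).ae_le ?_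
  simp only [ae_iff] at hp
  change (∑ i, ∑ j, ‖v i * v j‖₊ • (F i j).variation) {x | ¬ p x} = 0
  simp [hp]

end QuadMeasure

lemma IsPosSemidefMeasure.posSemidef_integral [Finite ι] (hF : IsPosSemidefMeasure F) {f : X → ℝ}
    (hint : ∀ i j, (F i j).Integrable f) (hf : ∀ i j, ∀ᵐ x ∂(F i j).variation, 0 ≤ f x) :
    (Matrix.of fun i j => ∫ᵛ x, f x ∂<•F i j).PosSemidef := by
  cases nonempty_fintype ι
  rw [isPosSemidefMeasure_iff] at hF
  refine Matrix.posSemidef_iff_dotProduct_mulVec.2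
    ⟨Matrix.IsHermitian.ext fun i j => by simp [hF.1 i j], fun v => ?_⟩
  rw [star_trivial, ← integral_quadMeasure hint]
  exact integral_signedMeasure_nonneg (hF.2 v) (ae_variation_quadMeasure hf v)

end MatrixMeasure

section MatrixHaviland

variable {ι V X : Type*} [AddCommGroup V] [Module ℝ V] [TopologicalSpace X] [CompactSpace X]

lemma isSymm_of_forall_posSemidef (T : V →ₗ[ℝ] C(X, ℝ)) {u : V} (hu : T u = 1)
    {L : V →ₗ[ℝ] Matrix ι ι ℝ} (hL : ∀ a, 0 ≤ T a → (L a).PosSemidef) (a : V) :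
    (L a).IsSymm := by
  have hnorm : 0 ≤ T (a + ‖T a‖ • u) := fun x => by
    simpa [hu] using neg_le_iff_add_nonneg.1 (neg_le_of_abs_le ((T a).norm_coe_le_norm x))
  have hconst : 0 ≤ T u := hu ▸ zero_le_one
  have := (hL _ hnorm).isHermitian.sub ((hL _ hconst).isHermitian.smul (.all ‖T a‖))
  simpa using this

variable [Finite ι] [T2Space X] [MeasurableSpace X] [BorelSpace X]

lemma exists_signedMeasure_of_forall_posSemidef (T : V →ₗ[ℝ] C(X, ℝ)) {u : V} (hu : T u = 1)
    {L : V →ₗ[ℝ] Matrix ι ι ℝ} (hL : ∀ a, 0 ≤ T a → (L a).PosSemidef) :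
    ∃ F : ι → ι → SignedMeasure X, ∀ a i j, L a i j = ∫ᵛ x, T a x ∂<•F i j := by
  classical
  cases nonempty_fintype ι
  have hform (v : ι → ℝ) : ∃ (μ : Measure X) (_ : IsFiniteMeasure μ),
      ∀ a, v ⬝ᵥ L a *ᵥ v = ∫ᵛ x, T a x ∂<•μ.toSignedMeasure := by
    let l : V →ₗ[ℝ] ℝ :=
      { toFun a := v ⬝ᵥ L a *ᵥ v
        map_add' a b := by rw [map_add, Matrix.add_mulVec, dotProduct_add]
        map_smul' c a := by rw [map_smul, Matrix.smul_mulVec, dotProduct_smul]; rfl }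
    obtain ⟨μ, hμ, h⟩ := exists_measure_of_forall_nonneg T hu (l := l)
      fun a ha => (hL a ha).dotProduct_mulVec_nonneg v
    exact ⟨μ, hμ, fun a => by rw [VectorMeasure.integral_toSignedMeasure]; exact h a⟩
  choose μ _ hμ using hform
  let e (i : ι) : ι → ℝ := Pi.single i 1
  refine ⟨fun i j => (1 / 4 : ℝ) •
    ((μ (e i + e j)).toSignedMeasure - (μ (e i - e j)).toSignedMeasure), fun a i j => ?_⟩
  have hint (s : SignedMeasure X) : s.Integrable (T a) :=
    integrable_signedMeasure_of_continuous isCompact_univ (by simp) (T a).continuous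
  have hsymm : L a j i = L a i j := (isSymm_of_forall_posSemidef T hu hL a).apply i j
  rw [VectorMeasure.integral_smul_vectorMeasure,
    VectorMeasure.integral_sub_vectorMeasure (hint _) (hint _), ← hμ, ← hμ]
  simp only [e, Matrix.mulVec_add, Matrix.mulVec_sub, dotProduct_add, dotProduct_sub,
    add_dotProduct, sub_dotProduct, Matrix.mulVec_single_one, single_one_dotProduct,
    Matrix.col_apply, hsymm, smul_eq_mul]
  ring

variable [HasOuterApproxClosed X] {A : Type*} [Ring A] [Algebra ℝ A] {T : A →ₐ[ℝ] C(X, ℝ)}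
  {L : A →ₗ[ℝ] Matrix ι ι ℝ}

lemma isPosSemidefMeasure_of_forall_posSemidef (hT : T.range.SeparatesPoints)
    (hL : ∀ a, 0 ≤ T a → (L a).PosSemidef) {F : ι → ι → SignedMeasure X}
    (hF : ∀ a i j, L a i j = ∫ᵛ x, T a x ∂<•F i j) : IsPosSemidefMeasure F := by
  have hint (s : SignedMeasure X) (a : A) : s.Integrable (T a) :=
    integrable_signedMeasure_of_continuous isCompact_univ (by simp) (T a).continuous
  cases nonempty_fintype ι
  refine isPosSemidefMeasure_iff.2 ⟨fun i j => sub_eq_zero.1 ?_, fun v => ?_⟩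
  · refine signedMeasure_eq_zero_of_forall_mem_subalgebra hT fun f hf => ?_
    obtain ⟨a, rfl⟩ := T.mem_range.1 hf
    rw [VectorMeasure.integral_sub_vectorMeasure (hint _ a) (hint _ a),
      ← hF, ← hF, sub_eq_zero]
    exact (isSymm_of_forall_posSemidef T.toLinearMap (map_one T) hL a).apply j i
  · refine signedMeasure_nonneg_of_forall_mem_subalgebra hT fun f hf ha => ?_
    obtain ⟨a, rfl⟩ := T.mem_range.1 hf
    rw [integral_quadMeasure fun i j => hint _ a]
    simp_rw [← hF]
    exact (hL a ha).dotProduct_mulVec_nonneg v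

theorem exists_isPosSemidefMeasure_of_forall_posSemidef (hT : T.range.SeparatesPoints)
    (hL : ∀ a, 0 ≤ T a → (L a).PosSemidef) :
    ∃ F : ι → ι → SignedMeasure X, IsPosSemidefMeasure F ∧
      ∀ a i j, L a i j = ∫ᵛ x, T a x ∂<•F i j := by
  obtain ⟨F, hF⟩ := exists_signedMeasure_of_forall_posSemidef T.toLinearMap (map_one T) hL
  exact ⟨F, isPosSemidefMeasure_of_forall_posSemidef hT hL hF, hF⟩

end MatrixHaviland

section Moment

variable {σ M : Type*} [AddCommGroup M] [Module ℝ M]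

/-- The Riesz functional of `S`: the linear map on polynomials sending the monomial `x ^ α` to
`S α`. -/
noncomputable def rieszFunctional (S : (σ → ℕ) → M) : MvPolynomial σ ℝ →ₗ[ℝ] M :=
  (MvPolynomial.basisMonomials σ ℝ).constr ℝ fun m => S m

lemma rieszFunctional_monomial (S : (σ → ℕ) → M) (m : σ →₀ ℕ) (c : ℝ) :
    rieszFunctional S (MvPolynomial.monomial m c) = c • S m := by
  have hbasis : MvPolynomial.monomial m c = c • MvPolynomial.basisMonomials σ ℝ m := by
    simp [MvPolynomial.smul_monomial]
  rw [hbasis, map_smul, rieszFunctional, Module.Basis.constr_basis]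

lemma isSymm_rieszFunctional {ι : Type*} {S : (σ → ℕ) → Matrix ι ι ℝ} (hS : ∀ α, (S α).IsSymm)
    (p : MvPolynomial σ ℝ) : (rieszFunctional S p).IsSymm := by
  induction p using MvPolynomial.induction_on' with
  | monomial m c =>
    rw [rieszFunctional_monomial]
    exact (hS m).smul c
  | add p q hp hq =>
    rw [map_add]
    exact hp.add hq

/-- The restriction of polynomial functions to `K`. -/
noncomputable def evalOn (K : Set (σ → ℝ)) : MvPolynomial σ ℝ →ₐ[ℝ] C(K, ℝ) :=
  MvPolynomial.aeval fun k => ⟨fun x => x.1 k, (continuous_apply k).comp continuous_subtype_val⟩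

lemma evalOn_apply (K : Set (σ → ℝ)) (p : MvPolynomial σ ℝ) (x : K) :
    evalOn K p x = MvPolynomial.eval x.1 p := by
  have hcomp : (ContinuousMap.evalAlgHom ℝ ℝ x).comp (evalOn K) = MvPolynomial.aeval x.1 :=
    MvPolynomial.algHom_ext fun k => by simp [evalOn]
  rw [← MvPolynomial.aeval_eq_eval, ← hcomp]
  rfl

lemma separatesPoints_range_evalOn (K : Set (σ → ℝ)) : (evalOn K).range.SeparatesPoints := by
  intro x y hxy
  obtain ⟨k, hk⟩ := Function.ne_iff.1 (Subtype.coe_ne_coe.2 hxy)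
  exact ⟨evalOn K (MvPolynomial.X k), ⟨_, ⟨MvPolynomial.X k, rfl⟩, rfl⟩, by simpa [evalOn_apply]⟩

variable {n t : ℕ} {S : (Fin n → ℕ) → Matrix (Fin t) (Fin t) ℝ} {K : Set (Fin n → ℝ)}

lemma isMatMomentSeq_iff_rieszFunctional_eq_integral (hK : IsCompact K) :
    IsMatMomentSeq S K ↔ ∃ E : Fin t → Fin t → SignedMeasure (Fin n → ℝ),
      IsPosSemidefMeasure E ∧ SuppSubset E K ∧
        ∀ p i j, rieszFunctional S p i j = ∫ᵛ x, MvPolynomial.eval x p ∂<•E i j := by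
  refine exists_congr fun E => and_congr_right fun _ => and_congr_right fun hE => ?_
  have hint (p : MvPolynomial (Fin n) ℝ) (i j : Fin t) :
      (E i j).Integrable fun x => MvPolynomial.eval x p :=
    integrable_signedMeasure_of_continuous hK
      ((E i j).totalVariation_eq_variation ▸ hE i j) p.continuous_eval
  have hmonomial (α : Fin n →₀ ℕ) (i j : Fin t) : sInt (E i j) (fun x => ∏ k, x k ^ α k) =
      ∫ᵛ x, MvPolynomial.eval x (MvPolynomial.monomial α 1) ∂<•E i j := by
    rw [← sInt_eq_integral (hint _ i j)]
    simp [MvPolynomial.eval_monomial, Finsupp.prod_fintype]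
  refine ⟨fun h p i j => ?_, fun h α i j => ?_⟩
  · induction p using MvPolynomial.induction_on' with
    | monomial α c =>
      rw [rieszFunctional_monomial, ← mul_one c, ← smul_eq_mul, ← MvPolynomial.smul_monomial]
      simp_rw [MvPolynomial.smul_eval, ← smul_eq_mul (a := c)]
      rw [VectorMeasure.integral_fun_smul, ← hmonomial, ← h]
      simp
    | add p q hp hq =>
      simp [hp, hq, VectorMeasure.integral_fun_add (hint p i j) (hint q i j)]
  · have := hmonomial (Finsupp.equivFunOnFinite.symm α) i j
    rw [← h, rieszFunctional_monomial, one_smul] at this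
    exact this.symm

theorem isMatMomentSeq_iff_posSemidef_of_isCompact (hK : IsCompact K) :
    IsMatMomentSeq S K ↔
      ∀ p, (∀ x ∈ K, 0 ≤ MvPolynomial.eval x p) → (rieszFunctional S p).PosSemidef := by
  have := isCompact_iff_compactSpace.1 hK
  rw [isMatMomentSeq_iff_rieszFunctional_eq_integral hK]
  constructor
  · rintro ⟨E, hE, hsupp, h⟩ p hp
    have heq : rieszFunctional S p = Matrix.of fun i j => ∫ᵛ x, MvPolynomial.eval x p ∂<•E i j :=
      Matrix.ext fun i j => h p i j
    have hvar (i j : Fin t) : (E i j).variation Kᶜ = 0 :=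
      (E i j).totalVariation_eq_variation ▸ hsupp i j
    rw [heq]
    refine hE.posSemidef_integral (fun i j => ?_) fun i j => ?_
    · exact integrable_signedMeasure_of_continuous hK (hvar i j) p.continuous_eval
    · exact Filter.mem_of_superset (show ∀ᵐ x ∂_, x ∈ K from hvar i j) hp
  · intro h
    obtain ⟨F, hF, hint⟩ := exists_isPosSemidefMeasure_of_forall_posSemidef
      (separatesPoints_range_evalOn K) (L := rieszFunctional S) fun p hp =>
        h p fun x hx => by simpa [evalOn_apply] using hp ⟨x, hx⟩
    have hemb := MeasurableEmbedding.subtype_coe hK.measurableSet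
    refine ⟨fun i j => (F i j).map Subtype.val, fun A hA => ?_, fun i j => ?_, fun p i j => ?_⟩
    · simpa only [VectorMeasure.map_apply _ measurable_subtype_coe hA] using
        hF _ (measurable_subtype_coe hA)
    · rw [SignedMeasure.totalVariation_eq_variation, hemb.variation_map, hemb.map_apply]
      simp
    · rw [hint, hemb.integral_map_vectorMeasure]
      simp_rw [evalOn_apply]

end Moment

section Trace

variable {ι : Type*} [Fintype ι]

lemma trace_vecMulVec_mul (v w : ι → ℝ) (M : Matrix ι ι ℝ) :
    (Matrix.vecMulVec v w * M).trace = w ⬝ᵥ M *ᵥ v := by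
  rw [Matrix.vecMulVec_mul, Matrix.trace_vecMulVec, dotProduct_comm, Matrix.dotProduct_mulVec]

lemma trace_mul_nonneg_of_posSemidef {G M : Matrix ι ι ℝ} (hG : G.PosSemidef)
    (hM : M.PosSemidef) : 0 ≤ (G * M).trace := by
  obtain ⟨m, v, rfl⟩ := Matrix.posSemidef_iff_eq_sum_vecMulVec.1 hG
  rw [Finset.sum_mul, Matrix.trace_sum]
  exact Finset.sum_nonneg fun i _ =>
    trace_vecMulVec_mul (v i) _ M ▸ hM.dotProduct_mulVec_nonneg (v i)

-- `v vᵀ` is the limit of the positive definite matrices `v vᵀ + ε • 1`.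
lemma posSemidef_iff_forall_posDef_trace_mul_nonneg {M : Matrix ι ι ℝ} (hM : M.IsSymm) :
    M.PosSemidef ↔ ∀ G : Matrix ι ι ℝ, G.PosDef → 0 ≤ (G * M).trace := by
  classical
  refine ⟨fun h G hG => trace_mul_nonneg_of_posSemidef hG.posSemidef h,
    fun h => Matrix.posSemidef_iff_dotProduct_mulVec.2 ⟨hM, fun v => ?_⟩⟩
  have hε (ε : ℝ) (hε : 0 < ε) : 0 ≤ v ⬝ᵥ M *ᵥ v + ε * M.trace := by
    have := h _ (Matrix.PosDef.posSemidef_add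
      (by simpa using Matrix.posSemidef_vecMulVec_self_star v) (Matrix.PosDef.one.smul hε))
    simpa [add_mul, trace_vecMulVec_mul] using this
  have hlim : Filter.Tendsto (fun ε : ℝ => v ⬝ᵥ M *ᵥ v + ε * M.trace)
      (nhdsWithin 0 (Set.Ioi 0)) (nhds (v ⬝ᵥ M *ᵥ v + 0 * M.trace)) :=
    Continuous.continuousWithinAt (by fun_prop)
  rw [zero_mul, add_zero] at hlim
  exact ge_of_tendsto hlim (Filter.eventually_of_mem self_mem_nhdsWithin hε)

end Trace

section Hypercube

lemma one_add_pow_mul_one_sub_pow {R : Type*} [CommRing R] (x : R) (a : ℕ × ℕ) :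
    (1 + x) ^ a.1 * (1 - x) ^ a.2 = ∑ b ∈ Finset.Iic a,
      (-1) ^ b.2 * ((a.1.choose b.1 : R) * (a.2.choose b.2 : R)) * x ^ (b.1 + b.2) := by
  rw [← Finset.Iic_product_Iic, Finset.sum_product, sub_eq_add_neg, add_comm 1, add_comm 1,
    add_pow, add_pow, Finset.sum_mul_sum, ← Nat.range_succ_eq_Iic, ← Nat.range_succ_eq_Iic]
  refine Finset.sum_congr rfl fun i _ => Finset.sum_congr rfl fun j _ => ?_
  rw [neg_pow]
  ring

lemma prod_one_add_pow_mul_one_sub_pow {ι R : Type*} [Fintype ι] [DecidableEq ι] [CommRing R]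
    (x : ι → R) (α : ι → ℕ × ℕ) :
    ∏ k, (1 + x k) ^ (α k).1 * (1 - x k) ^ (α k).2 =
      ∑ β ∈ Finset.Iic α, (-1) ^ (∑ k, (β k).2) *
        (∏ k, ((α k).1.choose (β k).1 : R) * ((α k).2.choose (β k).2 : R)) *
        ∏ k, x k ^ ((β k).1 + (β k).2) := by
  simp_rw [one_add_pow_mul_one_sub_pow]
  rw [Finset.prod_univ_sum]
  refine Finset.sum_congr ?_ fun β _ => ?_
  · ext β
    simp [Fintype.mem_piFinset, Pi.le_def]
  · simp [Finset.prod_mul_distrib, Finset.prod_pow_eq_pow_sum]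

variable {σ M : Type*} [Fintype σ] [AddCommGroup M] [Module ℝ M]

lemma rieszFunctional_boxMonomial [DecidableEq σ] (S : (σ → ℕ) → M) (α : σ → ℕ × ℕ) :
    rieszFunctional S (boxMonomial α) = ∑ β ∈ Finset.Iic α, ((-1 : ℝ) ^ (∑ k, (β k).2) *
      (∏ k, ((α k).1.choose (β k).1 : ℝ) * ((α k).2.choose (β k).2 : ℝ))) •
        S fun k => (β k).1 + (β k).2 := by
  rw [boxMonomial, prod_one_add_pow_mul_one_sub_pow, map_sum]
  refine Finset.sum_congr rfl fun β _ => ?_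
  have hmonomial : (∏ k, MvPolynomial.X k ^ ((β k).1 + (β k).2) : MvPolynomial σ ℝ) =
      MvPolynomial.monomial (Finsupp.equivFunOnFinite.symm fun k => (β k).1 + (β k).2) 1 := by
    rw [MvPolynomial.monomial_eq, Finsupp.prod_fintype _ _ fun k => pow_zero _]
    simp
  have hcoeff : ((-1) ^ (∑ k, (β k).2) * ∏ k, ((α k).1.choose (β k).1 : MvPolynomial σ ℝ) *
      ((α k).2.choose (β k).2 : MvPolynomial σ ℝ)) = MvPolynomial.C ((-1 : ℝ) ^ (∑ k, (β k).2) *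
        ∏ k, ((α k).1.choose (β k).1 : ℝ) * ((α k).2.choose (β k).2 : ℝ)) := by
    simp
  rw [hcoeff, hmonomial, MvPolynomial.C_mul_monomial, mul_one, rieszFunctional_monomial]
  rfl

lemma boxMonomial_nonneg_of_mem_Icc {x : σ → ℝ} (hx : x ∈ Set.Icc (-1) 1) (α : σ → ℕ × ℕ) :
    0 ≤ MvPolynomial.eval x (boxMonomial α) := by
  simp only [boxMonomial, map_prod, map_mul, map_pow, map_add, map_sub, map_one,
    MvPolynomial.eval_X]
  refine Finset.prod_nonneg fun k _ => mul_nonneg (pow_nonneg ?_ _) (pow_nonneg ?_ _)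
  · exact neg_le_iff_add_nonneg'.1 (hx.1 k)
  · exact sub_nonneg.2 (hx.2 k)

theorem isMatMomentSeq_Icc_iff {n t : ℕ} {S : (Fin n → ℕ) → Matrix (Fin t) (Fin t) ℝ}
    (hS : ∀ α, (S α).IsSymm) :
    IsMatMomentSeq S (Set.Icc (-1) 1) ↔ ∀ G : Matrix (Fin t) (Fin t) ℝ, G.PosDef →
      ∀ α, 0 ≤ (G * rieszFunctional S (boxMonomial α)).trace := by
  rw [isMatMomentSeq_iff_posSemidef_of_isCompact isCompact_Icc]
  constructor
  · intro h G hG α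
    exact trace_mul_nonneg_of_posSemidef hG.posSemidef
      (h _ fun x hx => boxMonomial_nonneg_of_mem_Icc hx α)
  · intro h p hp
    refine (posSemidef_iff_forall_posDef_trace_mul_nonneg (isSymm_rieszFunctional hS p)).2
      fun G hG => ?_
    exact nonneg_of_forall_boxMonomial_nonneg
      (l := Matrix.traceLinearMap (Fin t) ℝ ℝ ∘ₗ LinearMap.mulLeft ℝ G ∘ₗ rieszFunctional S)
      (h G hG) hp

end Hypercube

/-- a sequence `S` of symmetric matrices is a matrix-valued `[-1,1]ⁿ`-moment
sequence iff `Σ_{β ≤ α} (-1)^{e(β)} C(α,β) tr(G S_{π(β)}) ≥ 0` for all positive definite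
`G` and all `α ∈ ℕ₀^{2n}`. Multi-indices in `ℕ₀^{2n}` are encoded as `Fin n → ℕ × ℕ`
(odd-indexed entries first components, even-indexed entries second components), so
`e(β) = Σ_k (β k).2`, `C(α,β) = ∏_k C((α k).1,(β k).1) C((α k).2,(β k).2)` and
`π(β) = (fun k => (β k).1 + (β k).2)`. -/
theorem matMomentSeq_hypercube_iff (n t : ℕ)
    (S : (Fin n → ℕ) → Matrix (Fin t) (Fin t) ℝ) (hS : ∀ α, (S α).IsSymm) :
    IsMatMomentSeq S {x : Fin n → ℝ | ∀ k, x k ∈ Set.Icc (-1 : ℝ) 1} ↔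
      ∀ G : Matrix (Fin t) (Fin t) ℝ, G.PosDef → ∀ α : Fin n → ℕ × ℕ,
        0 ≤ ∑ β ∈ Finset.Iic α,
          (-1 : ℝ) ^ (∑ k, (β k).2) *
            (∏ k, ((α k).1.choose (β k).1 : ℝ) * ((α k).2.choose (β k).2 : ℝ)) *
            (G * S (fun k => (β k).1 + (β k).2)).trace := by
  have hcube : {x : Fin n → ℝ | ∀ k, x k ∈ Set.Icc (-1 : ℝ) 1} = Set.Icc (-1) 1 := by
    ext x
    exact forall_and
  have htrace (G : Matrix (Fin t) (Fin t) ℝ) (α : Fin n → ℕ × ℕ) :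
      (G * rieszFunctional S (boxMonomial α)).trace = ∑ β ∈ Finset.Iic α,
        (-1 : ℝ) ^ (∑ k, (β k).2) *
          (∏ k, ((α k).1.choose (β k).1 : ℝ) * ((α k).2.choose (β k).2 : ℝ)) *
          (G * S (fun k => (β k).1 + (β k).2)).trace := by
    simp_rw [rieszFunctional_boxMonomial, Finset.mul_sum, Matrix.trace_sum, mul_smul_comm,
      Matrix.trace_smul, smul_eq_mul]
  rw [hcube, isMatMomentSeq_Icc_iff hS]
  simp_rw [htrace]
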